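/- For each 1 ≤ i ≤ n the following are equivalent: (i) ω_i/k_i is an extreme point of the closure of Ω; (ii) the extended Dynkin diagram with the vertex α_i removed, D* − {α_i}, is connected, i.e. the set Π₀ ∖ {α_i} admits no partition into two nonempty mutually orthogonal subsets. -/

import Mathlib

open scoped RealInnerProductSpace

section Aux

variable {V : Type*} [NormedAddCommGroup V] [InnerProductSpace ℝ V]

lemma aux_closure (R : Set V) :
    closure {Y : V | ∀ α ∈ R, |⟪α, Y⟫| < 1} ⊆ {Y : V | ∀ α ∈ R, |⟪α, Y⟫| ≤ 1} := by
  apply closure_minimal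
  · intro Y hY α hα
    exact (hY α hα).le
  · have : {Y : V | ∀ α ∈ R, |⟪α, Y⟫| ≤ 1} = ⋂ α ∈ R, {Y : V | |⟪α, Y⟫| ≤ 1} := by
      ext Y; simp
    rw [this]
    refine isClosed_biInter fun α _ => isClosed_le ?_ continuous_const
    fun_prop

lemma aux_closure' (R : Set V) (Y : V) (hY : ∀ α ∈ R, |⟪α, Y⟫| ≤ 1) :
    Y ∈ closure {Y : V | ∀ α ∈ R, |⟪α, Y⟫| < 1} := by
  have h1 : Filter.Tendsto (fun t : ℝ => t • Y) (nhdsWithin 1 (Set.Ioo 0 1)) (nhds Y) := by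
    have : Filter.Tendsto (fun t : ℝ => t • Y) (nhds 1) (nhds ((1 : ℝ) • Y)) :=
      Continuous.tendsto (by fun_prop) 1
    rw [one_smul] at this
    exact this.mono_left nhdsWithin_le_nhds
  haveI : (nhdsWithin (1 : ℝ) (Set.Ioo 0 1)).NeBot :=
    mem_closure_iff_nhdsWithin_neBot.1 (by rw [closure_Ioo (by norm_num)]; simp)
  refine mem_closure_of_tendsto h1 ?_
  filter_upwards [self_mem_nhdsWithin] with t ht α hα
  rw [inner_smul_right, abs_mul, abs_of_pos ht.1]
  have := hY α hα
  nlinarith [ht.1, ht.2, abs_nonneg ⟪α, Y⟫]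

lemma aux_orth {n : ℕ} {R F : Set V} {a ω : Fin n → V} {k : Fin n → ℕ} {i : Fin n} {β : V}
    (hF : F = {γ | γ ∈ R ∧ ⟪γ, ω i⟫ = (k i : ℝ)})
    (hrefl : ∀ j, j ≠ i → ∀ γ ∈ F, γ - (2 * ⟪a j, γ⟫ / ⟪a j, a j⟫) • a j ∈ F)
    (hcrys : ∀ j, ∀ γ ∈ R, ∃ m : ℤ, (m : ℝ) = 2 * ⟪a j, γ⟫ / ⟪a j, a j⟫)
    (ha0 : ∀ j, a j ≠ 0)
    (hexp : ∀ α ∈ R, α = ∑ l, ⟪α, ω l⟫ • a l)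
    (hle : ∀ α ∈ R, ∀ l, ⟪α, ω l⟫ ≤ (k l : ℝ))
    (hβsum : β = ∑ i, (k i : ℝ) • a i)
    (hω : ∀ i j, ⟪a j, ω i⟫ = if i = j then (1 : ℝ) else 0)
    (T : Finset (Fin n)) (hiT : i ∉ T)
    (hST : ∀ l, l ≠ i → l ∉ T → ∀ j ∈ T, ⟪a l, a j⟫ = 0)
    (hβT : ∀ j ∈ T, ⟪β, a j⟫ = 0) :
    ∀ N : ℕ, ∀ γ ∈ F, ∑ l, ((k l : ℝ) - ⟪γ, ω l⟫) < N → ∀ j ∈ T, ⟪γ, a j⟫ = 0 := by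
  intro N
  induction N with
  | zero =>
    intro γ hγ h
    have hγR : γ ∈ R := by rw [hF] at hγ; exact hγ.1
    have : 0 ≤ ∑ l, ((k l : ℝ) - ⟪γ, ω l⟫) :=
      Finset.sum_nonneg fun l _ => sub_nonneg.2 (hle γ hγR l)
    simp at h; simp at this; linarith
  | succ N ih =>
    intro γ hγ h
    have hγR : γ ∈ R := by rw [hF] at hγ; exact hγ.1
    have hγi : ⟪γ, ω i⟫ = (k i : ℝ) := by rw [hF] at hγ; exact hγ.2
    have hnn : ∀ j ∈ T, 0 ≤ ⟪γ, a j⟫ := by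
      intro j hj
      by_contra! hneg
      have hji : j ≠ i := fun h => hiT (h ▸ hj)
      have haa : 0 < ⟪a j, a j⟫ := real_inner_self_pos.2 (ha0 j)
      obtain ⟨m, hm⟩ := hcrys j γ hγR
      have hγ' := hrefl j hji γ hγ
      have hm2 : (m : ℝ) * ⟪a j, a j⟫ = 2 * ⟪γ, a j⟫ := by
        rw [hm, real_inner_comm γ (a j)]; field_simp
      rw [← hm] at hγ'
      have hmneg : (m : ℝ) < 0 := by nlinarith
      have hm1 : (m : ℝ) ≤ -1 := by
        have : m < 0 := by exact_mod_cast hmneg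
        have : m ≤ -1 := by omega
        exact_mod_cast this
      have := ih _ hγ' (by
        have e : ∀ l, (k l : ℝ) - ⟪γ - (m : ℝ) • a j, ω l⟫
            = ((k l : ℝ) - ⟪γ, ω l⟫) + (if l = j then (m : ℝ) else 0) := by
          intro l
          rw [inner_sub_left, real_inner_smul_left, hω]
          split_ifs <;> ring
        simp only [e]
        rw [Finset.sum_add_distrib]
        simp only [Finset.sum_ite_eq', Finset.mem_univ, if_true]
        push_cast at h
        linarith) j hj
      rw [inner_sub_left, real_inner_smul_left, hm2] at this
      linarith
    set t : V := ∑ l ∈ T, ((k l : ℝ) - ⟪γ, ω l⟫) • a l with ht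
    have key : ∀ j ∈ T, ⟪γ, a j⟫ = - ⟪t, a j⟫ := by
      intro j hj
      have e1 : γ = β - ∑ l, ((k l : ℝ) - ⟪γ, ω l⟫) • a l := by
        conv_lhs => rw [hexp γ hγR]
        rw [hβsum, ← Finset.sum_sub_distrib]
        refine Finset.sum_congr rfl fun l _ => ?_
        rw [← sub_smul]; congr 1; ring
      have e2 : ⟪∑ l, ((k l : ℝ) - ⟪γ, ω l⟫) • a l, a j⟫ = ⟪t, a j⟫ := by
        rw [ht, sum_inner, sum_inner]
        symm
        apply Finset.sum_subset (Finset.subset_univ _)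
        intro l _ hl
        rw [real_inner_smul_left]
        by_cases hli : l = i
        · rw [hli, hγi]; simp
        · rw [hST l hli hl j hj, mul_zero]
      conv_lhs => rw [e1]
      rw [inner_sub_left, hβT j hj, e2, zero_sub]
    have ht0 : ⟪t, t⟫ ≤ 0 := by
      conv_lhs => arg 3; rw [ht]
      rw [inner_sum]
      refine Finset.sum_nonpos fun l hl => ?_
      rw [real_inner_smul_right]
      have h1 := key l hl
      have h2 := hnn l hl
      have h3 := hle γ hγR l
      nlinarith
    have ht1 : t = 0 := inner_self_eq_zero.1 (le_antisymm ht0 real_inner_self_nonneg)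
    intro j hj
    rw [key j hj, ht1]; simp

end Aux


/-- let `R` be an irreducible reduced crystallographic root system
spanning the inner product space `𝔞` (roots viewed as vectors, `α(Y) = ⟪α, Y⟫`),
with base `a : Fin n → 𝔞`, highest root `β = ∑ kᵢ aᵢ` (`kᵢ ∈ ℤ_{>0}`), fundamental
coweights `ω i` (`⟪a j, ω i⟫ = δᵢⱼ`), and `Ω = {Y : |⟪α,Y⟫| < 1 ∀ α ∈ R}`.
Then `ωᵢ/kᵢ` is an extreme point of the closure of `Ω` iff the extended Dynkin
diagram (vertices `Π₀ = {α₀ = -β, a 1, …, a n}`, indexed by `Option (Fin n)`,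
edges = non-orthogonality) with the vertex `aᵢ` deleted is connected, i.e. the
remaining vertex set admits no partition into two nonempty mutually orthogonal
parts. -/
theorem stmt_1 {𝔞 : Type*} [NormedAddCommGroup 𝔞] [InnerProductSpace ℝ 𝔞]
    [FiniteDimensional ℝ 𝔞]
    (R : Set 𝔞) (hRfin : R.Finite) (hR0 : (0 : 𝔞) ∉ R)
    (hRspan : Submodule.span ℝ R = ⊤)
    (hRinv : ∀ α ∈ R, ∀ γ ∈ R, γ - (2 * ⟪α, γ⟫ / ⟪α, α⟫) • α ∈ R)
    (hcrys : ∀ α ∈ R, ∀ γ ∈ R, ∃ m : ℤ, (m : ℝ) = 2 * ⟪α, γ⟫ / ⟪α, α⟫)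
    (hred : ∀ α ∈ R, ∀ c : ℝ, c • α ∈ R → c = 1 ∨ c = -1)
    (n : ℕ) (a : Fin n → 𝔞) (ha : ∀ i, a i ∈ R)
    (haind : LinearIndependent ℝ a)
    (hbase : ∀ α ∈ R, ∃ c : Fin n → ℤ, ((∀ i, 0 ≤ c i) ∨ (∀ i, c i ≤ 0)) ∧
        α = ∑ i, (c i : ℝ) • a i)
    (hirr : ¬ ∃ S T : Set (Fin n), S ∪ T = Set.univ ∧ S.Nonempty ∧ T.Nonempty ∧
        Disjoint S T ∧ ∀ s ∈ S, ∀ t ∈ T, ⟪a s, a t⟫ = 0)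
    (k : Fin n → ℕ) (hkpos : ∀ i, 0 < k i)
    (β : 𝔞) (hβR : β ∈ R) (hβsum : β = ∑ i, (k i : ℝ) • a i)
    (hhigh : ∀ α ∈ R, ∀ c : Fin n → ℝ, α = ∑ i, c i • a i → ∀ i, c i ≤ (k i : ℝ))
    (ω : Fin n → 𝔞) (hω : ∀ i j, ⟪a j, ω i⟫ = if i = j then (1 : ℝ) else 0)
    (Ω : Set 𝔞) (hΩ : Ω = {Y : 𝔞 | ∀ α ∈ R, |⟪α, Y⟫| < 1})
    (i : Fin n) :
    ((k i : ℝ)⁻¹ • ω i ∈ Set.extremePoints ℝ (closure Ω)) ↔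
    ¬ ∃ S T : Set (Option (Fin n)),
        S ∪ T = {j : Option (Fin n) | j ≠ some i} ∧ S.Nonempty ∧ T.Nonempty ∧
        Disjoint S T ∧
        ∀ s ∈ S, ∀ t ∈ T, ⟪s.elim (-β) a, t.elim (-β) a⟫ = 0 := by

  classical
  have ha0 : ∀ j, a j ≠ 0 := fun j h => hR0 (h ▸ ha j)
  have hki : (0 : ℝ) < k i := by exact_mod_cast hkpos i
  have hneg : ∀ α ∈ R, -α ∈ R := by
    intro α hα
    have h := hRinv α hα α hα
    have h0 : ⟪α, α⟫ ≠ 0 := by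
      rw [Ne, inner_self_eq_zero]; rintro rfl; exact hR0 hα
    rw [mul_div_assoc, div_self h0, mul_one, two_smul] at h
    simpa using h
  have hcoef : ∀ (c : Fin n → ℝ) (l : Fin n), ⟪∑ j, c j • a j, ω l⟫ = c l := by
    intro c l
    rw [sum_inner]
    simp [real_inner_smul_left, hω]
  have hexp : ∀ α ∈ R, α = ∑ l, ⟪α, ω l⟫ • a l := by
    intro α hα
    obtain ⟨c, -, hc⟩ := hbase α hα
    have h : ∀ l, ⟪α, ω l⟫ = (c l : ℝ) := fun l => by
      conv_lhs => rw [hc]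
      exact hcoef (fun j => (c j : ℝ)) l
    simp only [h]
    exact hc
  have hle : ∀ α ∈ R, ∀ l, ⟪α, ω l⟫ ≤ (k l : ℝ) := fun α hα l =>
    hhigh α hα (fun l => ⟪α, ω l⟫) (hexp α hα) l
  have hle' : ∀ α ∈ R, ∀ l, |⟪α, ω l⟫| ≤ (k l : ℝ) := by
    intro α hα l
    have h := hle _ (hneg α hα) l
    rw [inner_neg_left] at h
    exact abs_le.2 ⟨by linarith, hle α hα l⟩
  have hβω : ⟪β, ω i⟫ = (k i : ℝ) := by rw [hβsum]; exact hcoef (fun j => (k j : ℝ)) i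
  obtain ⟨F, hF⟩ : ∃ F : Set 𝔞, F = {γ | γ ∈ R ∧ ⟪γ, ω i⟫ = (k i : ℝ)} := ⟨_, rfl⟩
  have hFβ : β ∈ F := by rw [hF]; exact ⟨hβR, hβω⟩
  have hrefl : ∀ j, j ≠ i → ∀ γ ∈ F, γ - (2 * ⟪a j, γ⟫ / ⟪a j, a j⟫) • a j ∈ F := by
    intro j hj γ hγ
    rw [hF] at hγ ⊢
    refine ⟨hRinv _ (ha j) _ hγ.1, ?_⟩
    rw [inner_sub_left, real_inner_smul_left, hω, if_neg (Ne.symm hj), hγ.2]; simp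
  have hspan : Submodule.span ℝ (Set.range a) = ⊤ := by
    rw [eq_top_iff, ← hRspan, Submodule.span_le]
    intro α hα
    rw [hexp α hα]
    exact Submodule.sum_mem _ fun l _ =>
      Submodule.smul_mem _ _ (Submodule.subset_span ⟨l, rfl⟩)
  have hPin : ∀ α : 𝔞, ⟪α, (k i : ℝ)⁻¹ • ω i⟫ = (k i : ℝ)⁻¹ * ⟪α, ω i⟫ := fun α => by
    rw [real_inner_smul_right]
  have hP1 : ∀ α ∈ F, ⟪α, (k i : ℝ)⁻¹ • ω i⟫ = 1 := by
    intro α hα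
    rw [hF] at hα
    rw [hPin, hα.2, inv_mul_cancel₀ hki.ne']
  have hPle : ∀ α ∈ R, |⟪α, (k i : ℝ)⁻¹ • ω i⟫| ≤ 1 := by
    intro α hα
    rw [hPin, abs_mul, abs_of_pos (inv_pos.2 hki), inv_mul_le_iff₀ hki, mul_one]
    exact hle' α hα i
  have hFR : ∀ α ∈ F, α ∈ R := fun α hα => by rw [hF] at hα; exact hα.1
  generalize hPdef : (k i : ℝ)⁻¹ • ω i = P at *
  rw [hΩ]
  constructor
  · intro hext
    -- reduction: no nonzero vector orthogonal to F
    have hno : ∀ v : 𝔞, (∀ α ∈ F, ⟪α, v⟫ = 0) → v = 0 := by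
      intro v hv
      have hev : ∀ᶠ ε : ℝ in nhdsWithin 0 (Set.Ioi 0), ∀ α ∈ R,
          |⟪α, P⟫ + ε * ⟪α, v⟫| ≤ 1 ∧ |⟪α, P⟫ - ε * ⟪α, v⟫| ≤ 1 := by
        rw [Filter.eventually_all_finite hRfin]
        intro α hα
        by_cases h1 : |⟪α, P⟫| < 1
        · have c1 : Filter.Tendsto (fun ε : ℝ => |⟪α, P⟫ + ε * ⟪α, v⟫|) (nhdsWithin 0 (Set.Ioi 0))
              (nhds |⟪α, P⟫ + 0 * ⟪α, v⟫|) :=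
            (Continuous.tendsto (by fun_prop) 0).mono_left nhdsWithin_le_nhds
          have c2 : Filter.Tendsto (fun ε : ℝ => |⟪α, P⟫ - ε * ⟪α, v⟫|) (nhdsWithin 0 (Set.Ioi 0))
              (nhds |⟪α, P⟫ - 0 * ⟪α, v⟫|) :=
            (Continuous.tendsto (by fun_prop) 0).mono_left nhdsWithin_le_nhds
          rw [zero_mul, add_zero] at c1
          rw [zero_mul, sub_zero] at c2
          filter_upwards [c1.eventually (gt_mem_nhds h1), c2.eventually (gt_mem_nhds h1)]
            with ε e1 e2
          exact ⟨e1.le, e2.le⟩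
        · have h2 : |⟪α, P⟫| = 1 := le_antisymm (hPle α hα) (not_lt.1 h1)
          have h3 : ⟪α, v⟫ = 0 := by
            rcases (abs_eq zero_le_one).1 h2 with h | h
            · apply hv; rw [hF]; refine ⟨hα, ?_⟩
              rw [hPin] at h; field_simp at h; linarith
            · have : ⟪-α, v⟫ = 0 := by
                apply hv; rw [hF]; refine ⟨hneg α hα, ?_⟩
                rw [hPin] at h; field_simp at h; rw [inner_neg_left]; linarith
              rw [inner_neg_left] at this; linarith
          refine Filter.Eventually.of_forall fun ε => ?_
          rw [h3]; simp [h2]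
      obtain ⟨ε, h, hε⟩ := (hev.and self_mem_nhdsWithin).exists
      have m1 : P + ε • v ∈ closure {Y : 𝔞 | ∀ α ∈ R, |⟪α, Y⟫| < 1} :=
        aux_closure' R _ fun α hα => by
          rw [inner_add_right, real_inner_smul_right]; exact (h α hα).1
      have m2 : P - ε • v ∈ closure {Y : 𝔞 | ∀ α ∈ R, |⟪α, Y⟫| < 1} :=
        aux_closure' R _ fun α hα => by
          rw [inner_sub_right, real_inner_smul_right]; exact (h α hα).2
      have hseg : P ∈ openSegment ℝ (P + ε • v) (P - ε • v) := by
        refine ⟨1/2, 1/2, by norm_num, by norm_num, by norm_num, ?_⟩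
        module
      have := hext.2 m1 m2 hseg
      have h' : ε • v = 0 := by simpa using this
      exact (smul_eq_zero.1 h').resolve_left (ne_of_gt hε)
    have main : ∀ S T : Set (Option (Fin n)), S ∪ T = {j : Option (Fin n) | j ≠ some i} →
        T.Nonempty → none ∈ S → Disjoint S T →
        (∀ s ∈ S, ∀ t ∈ T, ⟪s.elim (-β) a, t.elim (-β) a⟫ = 0) → False := by
      intro S T hU hT hS hd ho
      obtain ⟨t, ht⟩ := hT
      have hnT : none ∉ T := fun h => Set.disjoint_left.1 hd hS h
      have hiT : some i ∉ T := fun h => by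
        have : some i ∈ S ∪ T := Or.inr h
        rw [hU] at this; exact this rfl
      cases t with
      | none => exact hnT ht
      | some j =>
        apply ha0 j
        apply hno
        intro γ hγ
        obtain ⟨N, hN⟩ := exists_nat_gt (∑ l, ((k l : ℝ) - ⟪γ, ω l⟫))
        refine aux_orth (T := Finset.univ.filter fun l => some l ∈ T) hF hrefl
          (fun j γ hγ => hcrys _ (ha j) γ hγ) ha0 hexp hle hβsum hω (by simpa using hiT)
          ?_ ?_ N γ hγ hN j (by simpa using ht)
        · intro l hl hlT j hj
          have hlT' : some l ∉ T := by simpa using hlT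
          have hjT : some j ∈ T := by simpa using hj
          have : some l ∈ S ∪ T := by rw [hU]; simpa using hl
          exact ho (some l) (this.resolve_right hlT') (some j) hjT
        · intro j hj
          have hjT : some j ∈ T := by simpa using hj
          have := ho none hS (some j) hjT
          simpa using this
    rintro ⟨S, T, hU, hS, hT, hd, ho⟩
    have hn : (none : Option (Fin n)) ∈ S ∪ T := by rw [hU]; simp
    rcases hn with hn | hn
    · exact main S T hU hT hn hd ho
    · exact main T S (by rw [Set.union_comm]; exact hU) hS hn hd.symm
        fun s hs t ht => by rw [real_inner_comm]; exact ho t ht s hs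
  · intro hcon
    have hdich : ∀ j, j ≠ i → a j ∉ Submodule.span ℝ F → ∀ x ∈ Submodule.span ℝ F,
        ⟪x, a j⟫ = 0 := by
      intro j hj hnot x hx
      induction hx using Submodule.span_induction with
      | mem γ hγ =>
        by_contra hne
        apply hnot
        have h1 := Submodule.subset_span (R := ℝ) (hrefl j hj γ hγ)
        have h2 := Submodule.sub_mem _ (Submodule.subset_span (R := ℝ) hγ) h1
        rw [sub_sub_cancel] at h2
        refine (Submodule.smul_mem_iff _ ?_).1 h2
        rw [real_inner_comm]
        have : ⟪a j, a j⟫ ≠ 0 := by rw [Ne, inner_self_eq_zero]; exact ha0 j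
        exact div_ne_zero (mul_ne_zero two_ne_zero hne) this
      | zero => simp
      | add x y _ _ h1 h2 => rw [inner_add_left, h1, h2, add_zero]
      | smul c x _ h => rw [real_inner_smul_left, h, mul_zero]
    have hmem : ∀ j, j ≠ i → a j ∈ Submodule.span ℝ F := by
      intro j hj
      by_contra hnot
      apply hcon
      refine ⟨{s | s ≠ some i ∧ s.elim (-β) a ∈ Submodule.span ℝ F},
        {s | s ≠ some i ∧ s.elim (-β) a ∉ Submodule.span ℝ F}, ?_, ⟨none, ?_⟩,
        ⟨some j, ?_⟩, ?_, ?_⟩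
      · ext s; simp only [Set.mem_union, Set.mem_setOf_eq]; tauto
      · exact ⟨by simp, by simpa using Submodule.subset_span hFβ⟩
      · exact ⟨by simpa using hj, hnot⟩
      · rw [Set.disjoint_left]; rintro s ⟨_, h⟩ ⟨_, h'⟩; exact h' h
      · rintro s ⟨_, hs⟩ t ⟨ht, ht'⟩
        cases t with
        | none => exact absurd (by simpa using Submodule.subset_span hFβ) ht'
        | some l => exact hdich l (by simpa using ht) ht' _ hs
    have hmemi : a i ∈ Submodule.span ℝ F := by
      have h1 : (k i : ℝ) • a i = β - ∑ l ∈ Finset.univ.erase i, (k l : ℝ) • a l := by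
        rw [hβsum, ← Finset.add_sum_erase _ _ (Finset.mem_univ i), add_sub_cancel_right]
      refine (Submodule.smul_mem_iff _ hki.ne').1 ?_
      rw [h1]
      refine Submodule.sub_mem _ (Submodule.subset_span hFβ) (Submodule.sum_mem _ fun l hl => ?_)
      exact Submodule.smul_mem _ _ (hmem l (Finset.ne_of_mem_erase hl))
    have htop : Submodule.span ℝ F = ⊤ := by
      rw [eq_top_iff, ← hspan, Submodule.span_le]
      rintro _ ⟨l, rfl⟩
      by_cases h : l = i
      · rw [h]; exact hmemi
      · exact hmem l h
    have hno : ∀ v : 𝔞, (∀ α ∈ F, ⟪α, v⟫ = 0) → v = 0 := by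
      intro v hv
      have : ∀ x ∈ Submodule.span ℝ F, ⟪x, v⟫ = 0 := by
        intro x hx
        induction hx using Submodule.span_induction with
        | mem γ hγ => exact hv γ hγ
        | zero => simp
        | add x y _ _ h1 h2 => rw [inner_add_left, h1, h2, add_zero]
        | smul c x _ h => rw [real_inner_smul_left, h, mul_zero]
      exact inner_self_eq_zero.1 (this v (by rw [htop]; trivial))
    refine ⟨aux_closure' R P hPle, ?_⟩
    intro x hx y hy hseg
    obtain ⟨s, t, hs, ht, hst, hxy⟩ := hseg
    have hx' := aux_closure R hx
    have hy' := aux_closure R hy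
    rw [← sub_eq_zero]
    apply hno
    intro α hα
    have h1 := (abs_le.1 (hx' α (hFR α hα))).2
    have h2 := (abs_le.1 (hy' α (hFR α hα))).2
    have h3 := hP1 α hα
    have h4 : s * ⟪α, x⟫ + t * ⟪α, y⟫ = 1 := by
      rw [← h3, ← hxy, inner_add_right, real_inner_smul_right, real_inner_smul_right]
    rw [inner_sub_right, h3]
    nlinarith
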